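/- Let F = 𝔽_{2^m} with m ≥ 1 and let α₁, …, α_m ∈ F satisfy Tr(αᵢαⱼ) = 1 if i = j and Tr(αᵢαⱼ) = 0 if i ≠ j (a trace-orthogonal basis). Then Σ_{i=1}^m αᵢ = 1. -/

import Mathlib

/-!
A family `α` that is orthonormal for the trace form and has as many members as the rank satisfies
`x = ∑ i, Tr (α i * x) • α i` for every `x`; at `x = 1` the coefficients are `Tr (α i)`. In
characteristic two `Tr (a ^ 2) = (Tr a) ^ 2`, because the off-diagonal terms of the trace of the
square of a matrix cancel in pairs. Hence `Tr (α i) ^ 2 = Tr (α i ^ 2) = 1`, and so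
`Tr (α i) = 1`.
-/

open Finset

noncomputable section

noncomputable instance (m : ℕ) : Fintype (GaloisField 2 m) := Fintype.ofFinite _
noncomputable instance (m : ℕ) : DecidableEq (GaloisField 2 m) := Classical.decEq _

/-- The absolute trace map `Tr : 𝔽_{2^m} → 𝔽₂`. -/
def Ftr {m : ℕ} (x : GaloisField 2 m) : ZMod 2 :=
  Algebra.trace (ZMod 2) (GaloisField 2 m) x

theorem sum_sum_eq_sum_diag_of_charTwo {ι R : Type*} [Fintype ι] [Semiring R] [CharP R 2]
    (f : ι → ι → R) (hf : ∀ i j, f i j = f j i) :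
    ∑ i, ∑ j, f i j = ∑ i, f i i := by
  classical
  have offDiag_eq_zero : ∑ p ∈ univ.offDiag, f p.1 p.2 = 0 := by
    refine sum_involution (fun p _ ↦ p.swap) (fun p _ ↦ ?_) (fun p hp _ ↦ ?_) (fun p hp ↦ ?_)
      (fun p _ ↦ p.swap_swap)
    · rw [Prod.fst_swap, Prod.snd_swap, hf p.2, CharTwo.add_self_eq_zero]
    · exact fun h ↦ (mem_offDiag.1 hp).2.2 (congrArg Prod.snd h)
    · simpa [eq_comm] using hp
  calc ∑ i, ∑ j, f i j = ∑ p ∈ univ ×ˢ univ, f p.1 p.2 := (sum_product' ..).symm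
    _ = ∑ p ∈ univ.diag, f p.1 p.2 + ∑ p ∈ univ.offDiag, f p.1 p.2 := by
      rw [← diag_union_offDiag, sum_union (disjoint_diag_offDiag _)]
    _ = ∑ i, f i i := by rw [offDiag_eq_zero, add_zero, sum_diag]

theorem matrix_trace_sq_of_charTwo {n R : Type*} [Fintype n] [DecidableEq n] [CommSemiring R]
    [CharP R 2] (M : Matrix n n R) : (M ^ 2).trace = M.trace ^ 2 := by
  calc (M ^ 2).trace = ∑ i, ∑ j, M i j * M j i := by
        simp only [sq, Matrix.trace, Matrix.diag_apply, Matrix.mul_apply]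
    _ = ∑ i, M i i * M i i := sum_sum_eq_sum_diag_of_charTwo _ fun _ _ ↦ mul_comm _ _
    _ = M.trace ^ 2 := by
        simp only [sq, Matrix.trace, Matrix.diag_apply, CharTwo.sum_mul_self]

theorem algebra_trace_sq_of_charTwo {R A : Type*} [CommRing R] [CharP R 2] [CommRing A]
    [Algebra R A] [Module.Free R A] [Module.Finite R A] (x : A) :
    Algebra.trace R A (x ^ 2) = Algebra.trace R A x ^ 2 := by
  classical
  let b := Module.Free.chooseBasis R A
  rw [Algebra.trace_eq_matrix_trace b, Algebra.trace_eq_matrix_trace b, map_pow,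
    matrix_trace_sq_of_charTwo]

theorem sum_bilinForm_smul_eq_of_orthonormal {ι R M : Type*} [Fintype ι] [DecidableEq ι]
    [CommRing R] [AddCommGroup M] [Module R M] [Module.Free R M] [Module.Finite R M]
    (B : LinearMap.BilinForm R M) (v : ι → M) (hv : ∀ i j, B (v i) (v j) = if i = j then 1 else 0)
    (hcard : Module.finrank R M ≤ Fintype.card ι) (x : M) :
    ∑ i, B (v i) x • v i = x := by
  rcases subsingleton_or_nontrivial R with _ | _
  · have := Module.subsingleton R M
    exact Subsingleton.elim _ _
  let coord : M →ₗ[R] ι → R := LinearMap.pi fun i ↦ B (v i)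
  have coord_sum (c : ι → R) : coord (∑ j, c j • v j) = c := by
    ext i
    simp [coord, hv]
  have coord_bijective : Function.Bijective coord :=
    OrzechProperty.bijective_of_surjective_of_finrank_le coord (fun c ↦ ⟨_, coord_sum c⟩)
      (hcard.trans_eq (Module.finrank_fintype_fun_eq_card R).symm)
  exact coord_bijective.injective (coord_sum (coord x))

theorem sum_traceOrthogonal_eq_one_general {ι R A : Type*} [Fintype ι] [DecidableEq ι]
    [CommRing R] [IsReduced R] [CharP R 2] [CommRing A] [Algebra R A] [Module.Free R A]
    [Module.Finite R A] (α : ι → A)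
    (hα : ∀ i j, Algebra.trace R A (α i * α j) = if i = j then 1 else 0)
    (hcard : Module.finrank R A ≤ Fintype.card ι) :
    ∑ i, α i = 1 := by
  have trace_eq_one (i : ι) : Algebra.trace R A (α i) = 1 := by
    apply frobenius_inj R 2
    rw [frobenius_def, ← algebra_trace_sq_of_charTwo, sq, hα, if_pos rfl, map_one]
  calc ∑ i, α i = ∑ i, Algebra.traceForm R A (α i) 1 • α i := by
        simp only [Algebra.traceForm_apply, mul_one, trace_eq_one, one_smul]
    _ = 1 := sum_bilinForm_smul_eq_of_orthonormal _ α hα hcard 1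

/-- The elements of a trace-orthogonal basis of `𝔽_{2^m}` over `𝔽₂` sum to `1`. -/
theorem sum_traceOrthogonal_eq_one {m : ℕ} (hm : 1 ≤ m)
    (α : Fin m → GaloisField 2 m)
    (hα : ∀ i j, Ftr (α i * α j) = if i = j then 1 else 0) :
    ∑ i, α i = 1 :=
  sum_traceOrthogonal_eq_one_general α hα
    (by rw [GaloisField.finrank 2 (Nat.one_le_iff_ne_zero.1 hm), Fintype.card_fin])

end
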